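/- (Hermite reciprocity) Let U be a 2-dimensional vector space over a field of characteristic zero. For all nonnegative integers d and i, there is a linear isomorphism Sym^d(Sym^i U) ≅ ⋀^i(Sym^{d+i−1} U). In particular, both spaces have dimension binomial(d+i, i). -/

import Mathlib

open scoped TensorProduct
open MvPolynomial Module

set_option maxHeartbeats 1000000
set_option synthInstance.maxHeartbeats 1000000
set_option maxSynthPendingDepth 3

noncomputable section

namespace KoszulMod

/-- `Sym^m U` for `U` a 2-dimensional space: binary forms of degree `m`. -/
abbrev SymU (𝕜 : Type*) [Field 𝕜] (m : ℕ) : Submodule 𝕜 (MvPolynomial (Fin 2) 𝕜) :=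
  homogeneousSubmodule (Fin 2) 𝕜 m

/-- `Sym^d(Sym^i U)`: since `Sym^i U` is `(i+1)`-dimensional, its `d`-th symmetric power is
modelled by homogeneous polynomials of degree `d` in `i+1` variables. -/
abbrev SymSymU (𝕜 : Type*) [Field 𝕜] (d i : ℕ) : Submodule 𝕜 (MvPolynomial (Fin (i + 1)) 𝕜) :=
  homogeneousSubmodule (Fin (i + 1)) 𝕜 d

/-! Over any nontrivial commutative ring the monomials of degree `n` form a basis of the homogeneous
polynomials of degree `n`, and they correspond to the multisets of size `n` in the set of variables.
So both modules are free: `Sym^d(Sym^i U)` of rank `multichoose (i + 1) d`, and `Sym^{d+i-1} U` of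
rank `d + i` (unless `d = i = 0`), which gives its `i`-th exterior power rank `choose (d + i) i`.
By stars and bars the two ranks agree. -/

section HomogeneousSubmodule

variable (σ R : Type*) (n : ℕ)

/-- The monomial basis of the homogeneous polynomials of degree `n`, used to show that they form
a free module and to compute its rank. It is indexed by the exponent vectors of degree `n`. -/
def homogeneousSubmoduleBasis [CommSemiring R] :
    Basis {e : σ →₀ ℕ | e.degree = n} R (homogeneousSubmodule σ R n) :=
  (basisRestrictSupport R {e : σ →₀ ℕ | e.degree = n}).map
    (LinearEquiv.ofEq _ _ (homogeneousSubmodule_eq_finsupp_supported σ R n).symm)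

instance homogeneousSubmodule_free [CommSemiring R] :
    Module.Free R (homogeneousSubmodule σ R n) :=
  .of_basis (homogeneousSubmoduleBasis σ R n)

instance homogeneousSubmodule_finite [Finite σ] [CommSemiring R] :
    Module.Finite R (homogeneousSubmodule σ R n) :=
  Module.Finite.iff_fg.mpr (homogeneousSubmodule_fg σ R n)

theorem natCard_finsupp_degree_eq :
    Nat.card {e : σ →₀ ℕ | e.degree = n} = (Nat.card σ).multichoose n := by
  classical
  rw [← Sym.natCard_sym_eq_multichoose]
  exact Nat.card_congr (Sym.equivNatSum σ n).symm

theorem finrank_homogeneousSubmodule [CommSemiring R] [StrongRankCondition R] :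
    finrank R (homogeneousSubmodule σ R n) = (Nat.card σ).multichoose n := by
  rw [finrank_eq_nat_card_basis (homogeneousSubmoduleBasis σ R n), natCard_finsupp_degree_eq]

end HomogeneousSubmodule

theorem finrank_homogeneousSubmodule_fin_add_one (R : Type*) [CommSemiring R]
    [StrongRankCondition R] (d i : ℕ) :
    finrank R (homogeneousSubmodule (Fin (i + 1)) R d) = (d + i).choose i := by
  rw [finrank_homogeneousSubmodule, Nat.card_fin, Nat.multichoose_eq, Nat.add_right_comm,
    Nat.add_sub_cancel, Nat.add_comm i d, Nat.choose_symm_add]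

theorem finrank_exteriorPower_homogeneousSubmodule_fin_two (R : Type*) [CommRing R] [Nontrivial R]
    (n k : ℕ) :
    finrank R (⋀[R]^k (homogeneousSubmodule (Fin 2) R n)) = (n + 1).choose k := by
  rw [exteriorPower.finrank_eq, finrank_homogeneousSubmodule_fin_add_one, Nat.choose_one_right]

theorem hermite_reciprocity_general (R : Type*) [CommRing R] [Nontrivial R] (d i : ℕ) :
    Nonempty (homogeneousSubmodule (Fin (i + 1)) R d ≃ₗ[R]
      ⋀[R]^i (homogeneousSubmodule (Fin 2) R (d + i - 1))) ∧
    finrank R (homogeneousSubmodule (Fin (i + 1)) R d) = (d + i).choose i ∧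
    finrank R (⋀[R]^i (homogeneousSubmodule (Fin 2) R (d + i - 1))) = (d + i).choose i := by
  have finrank_sym := finrank_homogeneousSubmodule_fin_add_one R d i
  have finrank_ext :
      finrank R (⋀[R]^i (homogeneousSubmodule (Fin 2) R (d + i - 1))) = (d + i).choose i := by
    rw [finrank_exteriorPower_homogeneousSubmodule_fin_two]
    -- For `d = i = 0` the subtraction truncates, but both binomial coefficients are `1`.
    obtain rfl | hi := i.eq_zero_or_pos
    · simp only [Nat.choose_zero_right]
    · rw [Nat.sub_add_cancel (Nat.le_add_left_of_le hi)]
  exact ⟨⟨.ofFinrankEq _ _ (finrank_sym.trans finrank_ext.symm)⟩, finrank_sym, finrank_ext⟩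

/-- Hermite reciprocity. Let `U` be a 2-dimensional vector space over a
field of characteristic zero.  For all `d, i ≥ 0` there is a linear isomorphism
`Sym^d(Sym^i U) ≅ ⋀^i(Sym^{d+i−1} U)`; in particular both spaces have dimension
`binomial (d+i) i`. -/
theorem hermite_reciprocity (𝕜 : Type*) [Field 𝕜] [CharZero 𝕜] (d i : ℕ) :
    Nonempty (↥(SymSymU 𝕜 d i) ≃ₗ[𝕜] ↥(⋀[𝕜]^i ↥(SymU 𝕜 (d + i - 1)))) ∧
    Module.finrank 𝕜 ↥(SymSymU 𝕜 d i) = Nat.choose (d + i) i ∧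
    Module.finrank 𝕜 ↥(⋀[𝕜]^i ↥(SymU 𝕜 (d + i - 1))) = Nat.choose (d + i) i :=
  hermite_reciprocity_general 𝕜 d i

end KoszulMod
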